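/- For every β ≥ 0 and c ≥ 0, the thermodynamic limit of the quenched pressure exists: the sequence p_N(β,c) converges as N → ∞, its limit p(β,c) equals sup_{N∈ℕ} p_N(β,c), and p(β,c) ≤ 𝒫(β,c). -/

import Mathlib

open MeasureTheory Filter

/-- Poisson probability mass function with parameter `lam`. -/
noncomputable def poissonPMF (lam : ℝ) (k : ℕ) : ℝ :=
  Real.exp (-lam) * lam ^ k / (Nat.factorial k)

/-- Potts Hamiltonian `H_N(σ, J) = Σ_{i,j} J_{ij} δ(σ_i, σ_j)`. -/
noncomputable def potts.H (q N : ℕ) (σ : Fin N → Fin q) (J : Fin N → Fin N → ℝ) : ℝ :=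
  ∑ i, ∑ j, J i j * (if σ i = σ j then (1 : ℝ) else 0)

/-- Partition function `Z_N(J)`. -/
noncomputable def potts.Z (q N : ℕ) (J : Fin N → Fin N → ℝ) : ℝ :=
  ∑ σ : Fin N → Fin q, Real.exp (- potts.H q N σ J)

/-- Expectation over the Poissonian disorder: the entries `J_{ij}` are independent
Poisson random variables with means `c_{ij} / (2N)`. -/
noncomputable def potts.E (N : ℕ) (c : Fin N → Fin N → ℝ)
    (g : (Fin N → Fin N → ℕ) → ℝ) : ℝ :=
  ∑' J : Fin N → Fin N → ℕ,
    (∏ i, ∏ j, poissonPMF (c i j / (2 * N)) (J i j)) * g J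

/-- Quenched pressure for a general nonnegative connectivity matrix `c`. -/
noncomputable def potts.pmat (q N : ℕ) (β : ℝ) (c : Fin N → Fin N → ℝ) : ℝ :=
  potts.E N c (fun J => (1 / N) * Real.log (potts.Z q N (fun i j => β * (J i j : ℝ))))

/-- Quenched pressure for the constant connectivity matrix `c_{ij} ≡ c`. -/
noncomputable def potts.p (q N : ℕ) (β c : ℝ) : ℝ :=
  potts.pmat q N β (fun _ _ => c)

/-- Annealed pressure `𝒫(β, c) = ln q + (c/2) ln(1 - (1 - e^{-β})/q)`. -/
noncomputable def potts.annealed (q : ℕ) (β c : ℝ) : ℝ :=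
  Real.log q + (c / 2) * Real.log (1 - (1 - Real.exp (-β)) / q)

section generic
set_option linter.unusedSectionVars false
variable {E : Type} [Fintype E] [DecidableEq E]

/-- unnormalised Poisson weight -/
noncomputable def pw (m : E → ℝ) (J : E → ℕ) : ℝ := ∏ e, m e ^ J e / (Nat.factorial (J e) : ℝ)

noncomputable def ph (g : (E → ℕ) → ℝ) : MvPolynomial E ℝ →ₗ[ℝ] ℝ :=
  (MvPolynomial.basisMonomials E ℝ).constr ℝ (fun s : E →₀ ℕ => g s)

noncomputable def lin (m : E → ℝ) : MvPolynomial E ℝ := ∑ e, m e • MvPolynomial.X e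

lemma ph_monomial (g : (E → ℕ) → ℝ) (s : E →₀ ℕ) (a : ℝ) :
    ph g (MvPolynomial.monomial s a) = a * g s := by
  have h : ph g (MvPolynomial.monomial s 1) = g s := by
    have := (MvPolynomial.basisMonomials E ℝ).constr_basis ℝ (fun s : E →₀ ℕ => g s) s
    rwa [MvPolynomial.coe_basisMonomials] at this
  have h2 : MvPolynomial.monomial s a = a • (MvPolynomial.monomial s (1:ℝ)) := by
    rw [MvPolynomial.smul_monomial]; simp
  rw [h2, map_smul, h, smul_eq_mul]

lemma pw_nonneg {m : E → ℝ} (hm : ∀ e, 0 ≤ m e) (J : E → ℕ) : 0 ≤ pw m J :=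
  Finset.prod_nonneg fun e _ => div_nonneg (pow_nonneg (hm e) _) (Nat.cast_nonneg _)

lemma pw_mult (m : E → ℝ) (J : E → ℕ) (M : ℕ) (h : ∑ e, J e = M) :
    pw m J = (Nat.multinomial Finset.univ J : ℝ) * (∏ e, m e ^ J e) / M.factorial := by
  unfold pw
  have := Nat.multinomial_spec Finset.univ J
  rw [h] at this
  have h2 : ((∏ e, (J e).factorial : ℕ) : ℝ) * (Nat.multinomial Finset.univ J : ℝ) = M.factorial := by
    exact_mod_cast this
  rw [← h2, Finset.prod_div_distrib]
  have h3 : ((∏ e, (J e).factorial : ℕ) : ℝ) ≠ 0 := by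
    exact_mod_cast (Finset.prod_ne_zero_iff.2 fun e _ => Nat.factorial_ne_zero _)
  have h4 : (Nat.multinomial Finset.univ J : ℝ) ≠ 0 := by
    intro h0; rw [h0, mul_zero] at h2; exact (Nat.cast_ne_zero.2 (Nat.factorial_ne_zero M)) h2.symm
  push_cast at h3 ⊢
  field_simp

lemma sum_pw (m : E → ℝ) (M : ℕ) :
    ∑ J ∈ Finset.piAntidiag Finset.univ M, pw m J = (∑ e, m e) ^ M / M.factorial := by
  rw [Finset.sum_pow_eq_sum_piAntidiag, Finset.sum_div]
  refine Finset.sum_congr rfl fun J hJ => ?_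
  exact pw_mult m J M (by simpa using hJ)

lemma ph_pow (m : E → ℝ) (g : (E → ℕ) → ℝ) (M : ℕ) :
    ∑ J ∈ Finset.piAntidiag Finset.univ M, pw m J * g J = ph g (lin m ^ M) / M.factorial := by
  unfold lin
  rw [Finset.sum_pow_eq_sum_piAntidiag, map_sum, Finset.sum_div]
  refine Finset.sum_congr rfl fun J hJ => ?_
  rw [pw_mult m J M (by simpa using hJ)]
  have : ((Nat.multinomial Finset.univ J : ℕ) : MvPolynomial E ℝ) *
      ∏ e, (m e • MvPolynomial.X e : MvPolynomial E ℝ) ^ J e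
      = MvPolynomial.monomial (Finsupp.equivFunOnFinite.symm J)
        ((Nat.multinomial Finset.univ J : ℝ) * (∏ e, m e ^ J e)) := by
    rw [MvPolynomial.monomial_eq, map_mul, map_natCast, mul_assoc]
    congr 1
    rw [Finsupp.prod_fintype _ _ (by simp), map_prod, ← Finset.prod_mul_distrib]
    refine Finset.prod_congr rfl fun e _ => ?_
    rw [MvPolynomial.smul_eq_C_mul, mul_pow, map_pow]
    rfl
  rw [this, ph_monomial]
  have h : ((Finsupp.equivFunOnFinite.symm J : E →₀ ℕ) : E → ℕ) = J := by
    ext e; rfl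
  rw [h]; ring

lemma fib (f : (E → ℕ) → ℝ) (M : ℕ) :
    HasSum (fun b : {J : E → ℕ // ∑ e, J e = M} => f b)
      (∑ J ∈ Finset.piAntidiag Finset.univ M, f J) := by
  have : ∀ J : E→ℕ, J ∈ Finset.piAntidiag Finset.univ M ↔ ∑ e, J e = M := by simp
  rw [← (Equiv.subtypeEquivRight this).hasSum_iff]
  exact Finset.hasSum _ f

lemma pw_summable {m : E → ℝ} (hm : ∀ e, 0 ≤ m e) : Summable (pw m) := by
  rw [← (Equiv.sigmaFiberEquiv (fun J : E → ℕ => ∑ e, J e)).summable_iff]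
  refine (summable_sigma_of_nonneg (fun x => pw_nonneg hm _)).2 ?_
  refine ⟨fun M => (fib (pw m) M).summable, ?_⟩
  have : (fun M => ∑' (y : {J : E → ℕ // ∑ e, J e = M}), pw m y) =
      fun M : ℕ => (∑ e, m e) ^ M / M.factorial := by
    funext M; rw [(fib (pw m) M).tsum_eq, sum_pw]
  exact this ▸ (Real.summable_pow_div_factorial _)

lemma pw_group (m : E → ℝ) (g : (E → ℕ) → ℝ) (hs : Summable fun J => pw m J * g J) :
    HasSum (fun M : ℕ => ∑ J ∈ Finset.piAntidiag Finset.univ M, pw m J * g J)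
      (∑' J, pw m J * g J) := by
  have h := (Equiv.sigmaFiberEquiv (fun J : E → ℕ => ∑ e, J e)).hasSum_iff.2 hs.hasSum
  exact h.sigma fun M => fib (fun J => pw m J * g J) M

lemma pw_summable_mul {m : E → ℝ} (hm : ∀ e, 0 ≤ m e) (g : (E → ℕ) → ℝ) (A : ℝ)
    (hg : ∀ J, |g J| ≤ A * 2 ^ (∑ e, J e)) : Summable fun J => pw m J * g J := by
  have h := (pw_summable (m := fun e => 2 * m e) (fun e => by have := hm e; positivity)).mul_left A
  refine Summable.of_norm_bounded h fun J => ?_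
  rw [Real.norm_eq_abs, abs_mul, abs_of_nonneg (pw_nonneg hm J)]
  have : pw (fun e => 2 * m e) J = 2 ^ (∑ e, J e) * pw m J := by
    unfold pw
    rw [← Finset.prod_pow_eq_pow_sum, ← Finset.prod_mul_distrib]
    refine Finset.prod_congr rfl fun e _ => ?_
    rw [mul_pow]; ring
  rw [this]
  calc _ ≤ pw m J * (A * 2 ^ (∑ e, J e)) := mul_le_mul_of_nonneg_left (hg J) (pw_nonneg hm J)
    _ = _ := by ring

lemma nn_lin_pow {m : E → ℝ} (hm : ∀ e, 0 ≤ m e) (P : MvPolynomial E ℝ) (hP : ∀ s, 0 ≤ P.coeff s)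
    (n : ℕ) : ∀ s, 0 ≤ (lin m ^ n * P).coeff s := by
  induction n with
  | zero => simpa using hP
  | succ n ih =>
    intro s
    have : lin m ^ (n+1) * P = (lin m ^ n * P) * lin m := by ring
    rw [this, MvPolynomial.coeff_mul]
    refine Finset.sum_nonneg fun x _ => mul_nonneg (ih _) ?_
    unfold lin
    rw [MvPolynomial.coeff_sum]
    refine Finset.sum_nonneg fun e _ => ?_
    rw [MvPolynomial.coeff_smul, MvPolynomial.coeff_X]
    split_ifs <;> simp [hm e]

lemma ph_mul_nonneg (g : (E → ℕ) → ℝ) (D Q : MvPolynomial E ℝ) (hQ : ∀ s, 0 ≤ Q.coeff s)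
    (hD : ∀ s, 0 ≤ ph g (MvPolynomial.monomial s 1 * D)) : 0 ≤ ph g (Q * D) := by
  rw [Q.as_sum, Finset.sum_mul, map_sum]
  refine Finset.sum_nonneg fun s _ => ?_
  have h2 : MvPolynomial.monomial s (Q.coeff s) = (Q.coeff s) • (MvPolynomial.monomial s (1:ℝ)) := by
    rw [MvPolynomial.smul_monomial]; simp
  rw [h2, smul_mul_assoc, map_smul, smul_eq_mul]
  exact mul_nonneg (hQ s) (hD s)

lemma ph_pow_le {m m' : E → ℝ} (hm : ∀ e, 0 ≤ m e) (hm' : ∀ e, 0 ≤ m' e) (g : (E → ℕ) → ℝ)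
    (hg : ∀ J : E → ℕ, 0 ≤ ∑ e, (m e - m' e) * g (J + (Pi.single e 1 : E → ℕ))) (M : ℕ) :
    ph g (lin m' ^ M) ≤ ph g (lin m ^ M) := by
  rw [← sub_nonneg, ← map_sub, ← geom_sum₂_mul]
  apply ph_mul_nonneg
  · intro s
    rw [MvPolynomial.coeff_sum]
    refine Finset.sum_nonneg fun i _ => nn_lin_pow hm _ (fun s => ?_) _ s
    have := nn_lin_pow hm' 1 (fun s => ?_) (M - 1 - i) s
    · simpa using this
    · rw [MvPolynomial.coeff_one]; split_ifs <;> simp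
  · intro s
    have := hg s
    convert this
    unfold lin
    rw [← Finset.sum_sub_distrib, Finset.mul_sum, map_sum]
    refine Finset.sum_congr rfl fun e _ => ?_
    rw [← sub_smul, mul_smul_comm, map_smul, smul_eq_mul, MvPolynomial.X,
      MvPolynomial.monomial_mul, ph_monomial]
    congr 1
    rw [mul_one, one_mul, Finsupp.coe_add, Finsupp.single_eq_pi_single]

lemma tsum_pw_le {m m' : E → ℝ} (hm : ∀ e, 0 ≤ m e) (hm' : ∀ e, 0 ≤ m' e) (g : (E → ℕ) → ℝ)
    (A : ℝ) (hA : ∀ J, |g J| ≤ A * 2 ^ (∑ e, J e))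
    (hg : ∀ J : E → ℕ, 0 ≤ ∑ e, (m e - m' e) * g (J + (Pi.single e 1 : E → ℕ))) :
    ∑' J, pw m' J * g J ≤ ∑' J, pw m J * g J := by
  refine hasSum_le (fun M => ?_) (pw_group m' g (pw_summable_mul hm' g A hA))
    (pw_group m g (pw_summable_mul hm g A hA))
  rw [ph_pow, ph_pow]
  exact div_le_div_of_nonneg_right (ph_pow_le hm hm' g hg M) (Nat.cast_nonneg _)

end generic
section pottsaux

noncomputable def GG (q N : ℕ) (β : ℝ) (J : Fin N × Fin N → ℕ) : ℝ :=
  Real.log (potts.Z q N (fun i j => β * (J (i, j) : ℝ)))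

lemma Z_pos (q N : ℕ) (hq : 2 ≤ q) (K : Fin N → Fin N → ℝ) : 0 < potts.Z q N K := by
  unfold potts.Z
  have : Nonempty (Fin q) := ⟨⟨0, by omega⟩⟩
  exact Finset.sum_pos (fun _ _ => Real.exp_pos _) Finset.univ_nonempty

lemma H_eq (q N : ℕ) (β : ℝ) (J : Fin N × Fin N → ℕ) (σ : Fin N → Fin q) :
    potts.H q N σ (fun i j => β * (J (i, j) : ℝ)) =
      ∑ e : Fin N × Fin N, β * (J e : ℝ) * (if σ e.1 = σ e.2 then (1:ℝ) else 0) := by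
  unfold potts.H
  rw [Fintype.sum_prod_type]

lemma H_nonneg (q N : ℕ) (β : ℝ) (hβ : 0 ≤ β) (J : Fin N × Fin N → ℕ) (σ : Fin N → Fin q) :
    0 ≤ potts.H q N σ (fun i j => β * (J (i, j) : ℝ)) := by
  rw [H_eq]
  refine Finset.sum_nonneg fun e _ => ?_
  split_ifs <;> simp; positivity

lemma H_le (q N : ℕ) (β : ℝ) (hβ : 0 ≤ β) (J : Fin N × Fin N → ℕ) (σ : Fin N → Fin q) :
    potts.H q N σ (fun i j => β * (J (i, j) : ℝ)) ≤ β * ((∑ e, J e : ℕ) : ℝ) := by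
  rw [H_eq]
  push_cast
  rw [Finset.mul_sum]
  refine Finset.sum_le_sum fun e _ => ?_
  split_ifs <;> simp; positivity

lemma GG_bound (q N : ℕ) (hq : 2 ≤ q) (β : ℝ) (hβ : 0 ≤ β) (J : Fin N × Fin N → ℕ) :
    |GG q N β J| ≤ (N * Real.log q + β) * 2 ^ (∑ e, J e) := by
  have hZ := Z_pos q N hq (fun i j => β * (J (i, j) : ℝ))
  have hq1 : (1:ℝ) ≤ q := by exact_mod_cast (by omega : 1 ≤ q)
  have hq0 : 0 ≤ Real.log q := Real.log_nonneg hq1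
  have hc : (∑ _σ : Fin N → Fin q, (1:ℝ)) = (q:ℝ)^N := by simp
  set n := ∑ e, J e with hn
  have h2 : (1:ℝ) ≤ 2 ^ n := one_le_pow₀ (by norm_num)
  have h3 : (n:ℝ) ≤ 2 ^ n := by exact_mod_cast (Nat.lt_two_pow_self (n := n)).le
  have hup : GG q N β J ≤ N * Real.log q := by
    unfold GG
    rw [← Real.log_pow]
    refine Real.log_le_log hZ ?_
    rw [← hc]
    refine Finset.sum_le_sum fun σ _ => ?_
    rw [Real.exp_le_one_iff]
    linarith [H_nonneg q N β hβ J σ]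
  have hlo : -(β * n) ≤ GG q N β J := by
    unfold GG
    rw [Real.le_log_iff_exp_le hZ]
    have h : ∑ _σ : Fin N → Fin q, Real.exp (-(β * n)) ≤ potts.Z q N (fun i j => β * (J (i, j) : ℝ)) := by
      refine Finset.sum_le_sum fun σ _ => ?_
      rw [Real.exp_le_exp]
      linarith [H_le q N β hβ J σ]
    refine le_trans ?_ h
    rw [← mul_one (Real.exp _), ← Finset.mul_sum, hc, mul_one]
    exact le_mul_of_one_le_right (Real.exp_pos _).le (one_le_pow₀ hq1)
  have hb : β * n ≤ β * 2 ^ n := mul_le_mul_of_nonneg_left h3 hβ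
  have hA : 0 ≤ N * Real.log q := by positivity
  have hA2 : N * Real.log q ≤ N * Real.log q * 2 ^ n := le_mul_of_one_le_right hA h2
  have hb2 : 0 ≤ β * 2 ^ n := by positivity
  have hb3 : 0 ≤ N * Real.log q * 2 ^ n := by positivity
  rw [abs_le]
  constructor <;> nlinarith

/-- Gram-type kernels -/
def IsGram {V : Type} (A : V × V → ℝ) : Prop :=
  ∃ (ι : Type) (_ : Fintype ι) (v : ι → V → ℝ), ∀ e, A e = ∑ s, v s e.1 * v s e.2

lemma IsGram.pow {V : Type} {A : V × V → ℝ} (hA : IsGram A) (k : ℕ) :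
    IsGram (fun e => A e ^ k) := by
  induction k with
  | zero => exact ⟨Unit, inferInstance, fun _ _ => 1, fun e => by simp⟩
  | succ k ih =>
    obtain ⟨ι, _, v, hv⟩ := hA
    obtain ⟨κ, _, u, hu⟩ := ih
    refine ⟨κ × ι, inferInstance, fun s i => u s.1 i * v s.2 i, fun e => ?_⟩
    simp only at hu ⊢
    rw [pow_succ, hu, hv, Finset.sum_mul_sum, Fintype.sum_prod_type]
    refine Finset.sum_congr rfl fun s _ => Finset.sum_congr rfl fun t _ => ?_
    ring

lemma gram_log {V : Type} [Fintype V] {A : V × V → ℝ} (hA : IsGram A) (x : ℝ) (hx : 0 ≤ x)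
    (hx1 : x < 1) (hA0 : ∀ e, 0 ≤ A e) (hA1 : ∀ e, A e ≤ 1) (D : V × V → ℝ)
    (hD : ∀ u : V → ℝ, ∑ e, D e * (u e.1 * u e.2) ≤ 0) :
    0 ≤ ∑ e, D e * Real.log (1 - x * A e) := by
  have hs : HasSum (fun n : ℕ => ∑ e, D e * ((x * A e) ^ (n+1) / ((n:ℝ)+1)))
      (∑ e, D e * (-Real.log (1 - x * A e))) := by
    refine hasSum_sum fun e _ => HasSum.mul_left _ ?_
    apply Real.hasSum_pow_div_log_of_abs_lt_one
    rw [abs_of_nonneg (mul_nonneg hx (hA0 e))]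
    nlinarith [hA1 e, hA0 e]
  have h0 : ∑ e, D e * (-Real.log (1 - x * A e)) ≤ 0 := by
    refine hasSum_le (fun n => ?_) hs hasSum_zero
    obtain ⟨ι, _, v, hv⟩ := hA.pow (n+1)
    simp only at hv
    have : ∑ e, D e * ((x * A e) ^ (n+1) / ((n:ℝ)+1)) =
        x ^ (n+1) / ((n:ℝ)+1) * ∑ s, ∑ e, D e * (v s e.1 * v s e.2) := by
      rw [Finset.sum_comm, Finset.mul_sum]
      refine Finset.sum_congr rfl fun e _ => ?_
      rw [← Finset.mul_sum, ← hv, mul_pow]; ring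
    rw [this]
    exact mul_nonpos_of_nonneg_of_nonpos (by positivity) (Finset.sum_nonpos fun s _ => hD _)
  simp only [mul_neg, Finset.sum_neg_distrib] at h0
  linarith

lemma key (q N : ℕ) (hq : 2 ≤ q) (β : ℝ) (hβ : 0 ≤ β) (D : Fin N × Fin N → ℝ)
    (hD0 : ∑ e, D e = 0)
    (hD : ∀ u : Fin N → ℝ, ∑ e, D e * (u e.1 * u e.2) ≤ 0) (J : Fin N × Fin N → ℕ) :
    0 ≤ ∑ e, D e * GG q N β (J + (Pi.single e 1 : Fin N × Fin N → ℕ)) := by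
  set w : (Fin N → Fin q) → ℝ := fun σ =>
    Real.exp (- potts.H q N σ (fun i j => β * (J (i, j) : ℝ))) with hw
  have hw0 : ∀ σ, 0 < w σ := fun σ => Real.exp_pos _
  set Z := potts.Z q N (fun i j => β * (J (i, j) : ℝ)) with hZd
  have hZ : 0 < Z := Z_pos q N hq _
  have hZw : Z = ∑ σ, w σ := rfl
  set A : Fin N × Fin N → ℝ := fun e => ∑ σ, w σ / Z * (if σ e.1 = σ e.2 then (1:ℝ) else 0) with hA
  have hA0 : ∀ e, 0 ≤ A e := fun e => Finset.sum_nonneg fun σ _ => by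
    have := hw0 σ
    split_ifs <;> simp; positivity
  have hA1 : ∀ e, A e ≤ 1 := fun e => by
    have : (1:ℝ) = ∑ σ, w σ / Z := by rw [← Finset.sum_div, ← hZw, div_self hZ.ne']
    rw [this]
    refine Finset.sum_le_sum fun σ _ => ?_
    have := hw0 σ
    split_ifs <;> simp; positivity
  have hG : IsGram A := by
    refine ⟨(Fin N → Fin q) × Fin q, inferInstance,
      fun s i => Real.sqrt (w s.1 / Z) * (if s.1 i = s.2 then 1 else 0), fun e => ?_⟩
    rw [Fintype.sum_prod_type]
    refine Finset.sum_congr rfl fun σ _ => ?_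
    have h1 : Real.sqrt (w σ / Z) * Real.sqrt (w σ / Z) = w σ / Z :=
      Real.mul_self_sqrt (div_nonneg (hw0 σ).le hZ.le)
    have h2 : ∀ τ, Real.sqrt (w σ / Z) * (if σ e.1 = τ then (1:ℝ) else 0) *
        (Real.sqrt (w σ / Z) * (if σ e.2 = τ then 1 else 0)) =
        w σ / Z * (if σ e.1 = τ then (if σ e.2 = τ then 1 else 0) else 0) := by
      intro τ; split_ifs <;> simp [h1]
    simp only [h2]
    rw [← Finset.mul_sum]
    congr 1
    simp [eq_comm]
  have hx0 : 0 ≤ 1 - Real.exp (-β) := by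
    have : Real.exp (-β) ≤ 1 := Real.exp_le_one_iff.2 (by linarith)
    linarith
  have hx1 : 1 - Real.exp (-β) < 1 := by linarith [Real.exp_pos (-β)]
  have hstep : ∀ e, GG q N β (J + (Pi.single e 1 : Fin N × Fin N → ℕ)) =
      Real.log Z + Real.log (1 - (1 - Real.exp (-β)) * A e) := by
    intro e
    rw [← Real.log_mul hZ.ne' (by nlinarith [hA0 e, hA1 e, hx0, hx1])]
    unfold GG
    congr 1
    have h1 : ∀ σ : Fin N → Fin q, Real.exp (- potts.H q N σ
        (fun i j => β * (((J + (Pi.single e 1 : Fin N × Fin N → ℕ)) (i, j) : ℕ) : ℝ))) =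
        w σ - (1 - Real.exp (-β)) * (w σ * (if σ e.1 = σ e.2 then (1:ℝ) else 0)) := by
      intro σ
      have h2 : potts.H q N σ
        (fun i j => β * (((J + (Pi.single e 1 : Fin N × Fin N → ℕ)) (i, j) : ℕ) : ℝ)) =
        potts.H q N σ (fun i j => β * (J (i, j) : ℝ)) +
          β * (if σ e.1 = σ e.2 then (1:ℝ) else 0) := by
        rw [H_eq, H_eq]
        simp only [Pi.add_apply, Nat.cast_add, mul_add, add_mul, Finset.sum_add_distrib]
        congr 1
        rw [Finset.sum_eq_single e]
        · simp
        · intro b _ hb; simp [Pi.single_eq_of_ne hb]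
        · simp
      rw [h2, neg_add, Real.exp_add]
      simp only [hw]
      split_ifs <;> simp
      ring
    unfold potts.Z
    simp only [h1]
    rw [Finset.sum_sub_distrib, ← hZw, ← Finset.mul_sum]
    have h3 : ∑ σ, w σ * (if σ e.1 = σ e.2 then (1:ℝ) else 0) = Z * A e := by
      rw [hA, Finset.mul_sum]
      refine Finset.sum_congr rfl fun σ _ => ?_
      field_simp
    rw [h3]; ring
  simp only [hstep, mul_add, Finset.sum_add_distrib]
  rw [← Finset.sum_mul, hD0, zero_mul, zero_add]
  exact gram_log hG _ hx0 hx1 hA0 hA1 D hD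

lemma delta_sum (q N : ℕ) (hq : 2 ≤ q) (σ : Fin N → Fin q) :
    (N:ℝ)^2 / q ≤ ∑ e : Fin N × Fin N, (if σ e.1 = σ e.2 then (1:ℝ) else 0) := by
  have h1 : ∑ e : Fin N × Fin N, (if σ e.1 = σ e.2 then (1:ℝ) else 0) =
      ∑ τ : Fin q, (∑ i, if σ i = τ then (1:ℝ) else 0) ^ 2 := by
    simp only [sq, Finset.sum_mul_sum]
    rw [Fintype.sum_prod_type, Finset.sum_comm (s := (Finset.univ : Finset (Fin q)))]
    refine Finset.sum_congr rfl fun i _ => ?_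
    rw [Finset.sum_comm]
    refine Finset.sum_congr rfl fun j _ => ?_
    simp [eq_comm]
  have h2 : ∑ τ : Fin q, (∑ i, if σ i = τ then (1:ℝ) else 0) = N := by
    rw [Finset.sum_comm]; simp
  have h3 := sq_sum_le_card_mul_sum_sq (s := (Finset.univ : Finset (Fin q)))
    (f := fun τ => ∑ i, if σ i = τ then (1:ℝ) else 0)
  rw [h2] at h3
  rw [h1, div_le_iff₀ (by positivity)]
  simp only [Finset.card_univ, Fintype.card_fin] at h3
  linarith

lemma poisson_mean (l : ℝ) : HasSum (fun M : ℕ => l ^ M / M.factorial * (M:ℝ)) (l * Real.exp l) := by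
  rw [← hasSum_nat_add_iff' 1]
  simp only [Finset.sum_range_one, Nat.cast_zero, mul_zero, sub_zero]
  have := (NormedSpace.expSeries_div_hasSum_exp l).mul_left l
  rw [← Real.exp_eq_exp_ℝ] at this
  have h2 : (fun M : ℕ => l ^ (M+1) / ((M+1).factorial : ℝ) * ((M+1 : ℕ):ℝ)) =
      fun M : ℕ => l * (l ^ M / (M.factorial : ℝ)) := by
    funext M
    rw [Nat.factorial_succ]; push_cast
    field_simp
    ring
  rw [h2]; exact this

lemma poisson_one (l : ℝ) : HasSum (fun M : ℕ => l ^ M / M.factorial) (Real.exp l) := by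
  have := (NormedSpace.expSeries_div_hasSum_exp l)
  rwa [← Real.exp_eq_exp_ℝ] at this

lemma pw_hasSum {E : Type} [Fintype E] [DecidableEq E] {m : E → ℝ} (hm : ∀ e, 0 ≤ m e) :
    HasSum (pw m) (Real.exp (∑ e, m e)) := by
  have hs := pw_summable hm
  have h := pw_group m (fun _ => 1) (by simpa using hs)
  simp only [mul_one, sum_pw] at h
  rw [← h.unique (poisson_one _)]
  exact hs.hasSum

lemma annealed_bound (q N : ℕ) (hq : 2 ≤ q) (hN : 0 < N) (β c : ℝ) (hβ : 0 ≤ β) (hc : 0 ≤ c) :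
    ∑' J, pw (fun _ : Fin N × Fin N => c / (2 * N)) J * GG q N β J ≤
      Real.exp (c * N / 2) * (N * potts.annealed q β c) := by
  set m : Fin N × Fin N → ℝ := fun _ => c / (2 * N) with hm
  have hN' : (0:ℝ) < N := by exact_mod_cast hN
  have hm0 : ∀ e, 0 ≤ m e := fun e => by simp only [hm]; positivity
  have hq2 : (2:ℝ) ≤ q := by exact_mod_cast hq
  set l := c * N / 2 with hl
  have hml : ∑ e, m e = l := by
    simp [hm, hl]; field_simp
  set x := 1 - Real.exp (-β) with hx
  have hx0 : 0 ≤ x := by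
    have : Real.exp (-β) ≤ 1 := Real.exp_le_one_iff.2 (by linarith)
    linarith
  have hx1 : x < 1 := by linarith [Real.exp_pos (-β)]
  set r := 1 - x / q with hr
  have hr0 : 0 < r := by
    have : x / q < 1 := by rw [div_lt_one (by linarith)]; linarith
    linarith
  have hl0 : 0 ≤ l := by positivity
  have hS : HasSum (fun M : ℕ => l ^ M / M.factorial * (N * Real.log q) +
      l ^ M / M.factorial * M * Real.log r) (Real.exp l * (N * potts.annealed q β c)) := by
    have := ((poisson_one l).mul_right (N * Real.log q)).add
      ((poisson_mean l).mul_right (Real.log r))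
    have h2 : Real.exp l * (N * potts.annealed q β c) =
        Real.exp l * (N * Real.log q) + l * Real.exp l * Real.log r := by
      unfold potts.annealed
      rw [← hx, ← hr, hl]; ring
    rw [h2]; exact this
  refine hasSum_le (fun M => ?_) (pw_group m _ (pw_summable_mul hm0 _ _ (GG_bound q N hq β hβ))) hS
  set a : ℝ := (q:ℝ)^N * r^M with ha
  have ha0 : 0 < a := by positivity
  have hla : Real.log a = N * Real.log q + M * Real.log r := by
    rw [ha, Real.log_mul (by positivity) (by positivity), Real.log_pow, Real.log_pow]
  have h1 : ∀ J : Fin N × Fin N → ℕ, GG q N β J ≤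
      Real.log a - 1 + potts.Z q N (fun i j => β * (J (i, j) : ℝ)) / a := by
    intro J
    have hZ := Z_pos q N hq (fun i j => β * (J (i, j) : ℝ))
    have := Real.log_le_sub_one_of_pos (div_pos hZ ha0)
    rw [Real.log_div hZ.ne' ha0.ne'] at this
    unfold GG; linarith
  have hexp : ∀ (σ : Fin N → Fin q) (J : Fin N × Fin N → ℕ),
      pw m J * Real.exp (- potts.H q N σ (fun i j => β * (J (i, j) : ℝ))) =
      pw (fun e => m e * Real.exp (-(β * if σ e.1 = σ e.2 then (1:ℝ) else 0))) J := by
    intro σ J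
    rw [H_eq, ← Finset.sum_neg_distrib, Real.exp_sum]
    unfold pw
    rw [← Finset.prod_mul_distrib]
    refine Finset.prod_congr rfl fun e _ => ?_
    rw [mul_pow, ← Real.exp_nat_mul]
    have : ∀ t : ℝ, -(β * (J e : ℝ) * t) = (J e : ℝ) * -(β * t) := fun t => by ring
    rw [this]; ring
  have hsig : ∀ σ : Fin N → Fin q,
      ∑ e, m e * Real.exp (-(β * if σ e.1 = σ e.2 then (1:ℝ) else 0)) ≤ l * r := by
    intro σ
    have h2 : ∀ e : Fin N × Fin N, m e * Real.exp (-(β * if σ e.1 = σ e.2 then (1:ℝ) else 0)) =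
        m e - c / (2 * N) * x * (if σ e.1 = σ e.2 then (1:ℝ) else 0) := by
      intro e; simp only [hm, hx]; split_ifs <;> simp; ring
    simp only [h2]
    rw [Finset.sum_sub_distrib, hml, ← Finset.mul_sum]
    have h3 := mul_le_mul_of_nonneg_left (delta_sum q N hq σ)
      (show 0 ≤ c / (2 * N) * x by positivity)
    have h4 : c / (2 * N) * x * ((N:ℝ)^2 / q) = l * (x / q) := by
      rw [hl]; field_simp
    rw [h4] at h3
    rw [hr]; linarith
  have hZs : ∑ J ∈ Finset.piAntidiag Finset.univ M,
      pw m J * potts.Z q N (fun i j => β * (J (i, j) : ℝ)) ≤ l ^ M / M.factorial * a := by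
    unfold potts.Z
    simp only [Finset.mul_sum, hexp]
    rw [Finset.sum_comm]
    simp only [sum_pw]
    calc _ ≤ ∑ σ : Fin N → Fin q, (l * r) ^ M / M.factorial := by
          refine Finset.sum_le_sum fun σ _ => ?_
          refine div_le_div_of_nonneg_right ?_ (Nat.cast_nonneg _)
          refine pow_le_pow_left₀ (Finset.sum_nonneg fun e _ => ?_) (hsig σ) M
          exact mul_nonneg (hm0 e) (Real.exp_pos _).le
      _ = _ := by
          rw [Finset.sum_const, Finset.card_univ]
          simp [ha, mul_pow]; ring
  calc _ ≤ ∑ J ∈ Finset.piAntidiag Finset.univ M, (pw m J * (Real.log a - 1) +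
        pw m J * potts.Z q N (fun i j => β * (J (i, j) : ℝ)) / a) := by
        refine Finset.sum_le_sum fun J _ => ?_
        have := mul_le_mul_of_nonneg_left (h1 J) (pw_nonneg hm0 J)
        rw [mul_add, ← mul_div_assoc] at this
        exact this
    _ ≤ l ^ M / M.factorial * (Real.log a - 1) + l ^ M / M.factorial := by
        rw [Finset.sum_add_distrib, ← Finset.sum_mul, sum_pw, hml, ← Finset.sum_div]
        refine add_le_add le_rfl ?_
        rwa [div_le_iff₀ ha0]
    _ = _ := by rw [hla]; ring

def blk {α : Type} [Zero α] (a b : ℕ) (f : Fin a × Fin a → α) (g : Fin b × Fin b → α)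
    (e : Fin (a + b) × Fin (a + b)) : α :=
  Fin.addCases (motive := fun _ => α)
    (fun i => Fin.addCases (motive := fun _ => α) (fun j => f (i, j)) (fun _ => 0) e.2)
    (fun i => Fin.addCases (motive := fun _ => α) (fun _ => 0) (fun j => g (i, j)) e.2) e.1

lemma pw_blk (a b : ℕ) (m1 : Fin a × Fin a → ℝ) (m2 : Fin b × Fin b → ℝ)
    (J1 : Fin a × Fin a → ℕ) (J2 : Fin b × Fin b → ℕ) :
    pw (blk a b m1 m2) (blk a b J1 J2) = pw m1 J1 * pw m2 J2 := by
  unfold pw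
  simp only [Fintype.prod_prod_type, Fin.prod_univ_add]
  simp [blk]

lemma Z_blk (q a b : ℕ) (β : ℝ) (J1 : Fin a × Fin a → ℕ) (J2 : Fin b × Fin b → ℕ) :
    potts.Z q (a + b) (fun i j => β * ((blk a b J1 J2 (i, j) : ℕ) : ℝ)) =
      potts.Z q a (fun i j => β * (J1 (i, j) : ℝ)) * potts.Z q b (fun i j => β * (J2 (i, j) : ℝ)) := by
  unfold potts.Z
  rw [← (Fin.appendEquiv a b).sum_comp, Fintype.sum_prod_type, Finset.sum_mul_sum]
  refine Finset.sum_congr rfl fun σ _ => Finset.sum_congr rfl fun τ _ => ?_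
  rw [← Real.exp_add]
  congr 1
  unfold potts.H
  simp only [Fin.sum_univ_add]
  simp [blk, Fin.appendEquiv]
  ring

lemma tsum_aux {α γ : Type} {f p : α → ℝ} {g r : γ → ℝ} {P Q : ℝ} (hf : Summable f)
    (hg : Summable g) (hp : HasSum p P) (hr : HasSum r Q) :
    HasSum (fun x : α × γ => f x.1 * r x.2 + p x.1 * g x.2) (Q * (∑' a, f a) + P * ∑' b, g b) := by
  have hA := hf.hasSum.mul hr (summable_mul_of_summable_norm hf.norm hr.summable.norm)
  have hB := hp.mul hg.hasSum (summable_mul_of_summable_norm hp.summable.norm hg.norm)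
  rw [mul_comm Q]
  exact hA.add hB

lemma split_sum (q a b : ℕ) (hq : 2 ≤ q) (β : ℝ) (hβ : 0 ≤ β)
    (m1 : Fin a × Fin a → ℝ) (m2 : Fin b × Fin b → ℝ) (h1 : ∀ e, 0 ≤ m1 e) (h2 : ∀ e, 0 ≤ m2 e) :
    ∑' J, pw (blk a b m1 m2) J * GG q (a + b) β J =
      Real.exp (∑ e, m2 e) * (∑' J, pw m1 J * GG q a β J) +
      Real.exp (∑ e, m1 e) * (∑' J, pw m2 J * GG q b β J) := by
  have hinj : Function.Injective (fun p : (Fin a × Fin a → ℕ) × (Fin b × Fin b → ℕ) =>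
      blk a b p.1 p.2) := by
    rintro ⟨J1, J2⟩ ⟨K1, K2⟩ h
    simp only at h
    refine Prod.ext (funext fun e => ?_) (funext fun e => ?_)
    · simpa [blk] using congrFun h (Fin.castAdd b e.1, Fin.castAdd b e.2)
    · simpa [blk] using congrFun h (Fin.natAdd a e.1, Fin.natAdd a e.2)
  rw [← hinj.tsum_eq]
  · have hs1 := pw_summable_mul h1 _ _ (GG_bound q a hq β hβ)
    have hs2 := pw_summable_mul h2 _ _ (GG_bound q b hq β hβ)
    have hp1 := pw_hasSum h1
    have hp2 := pw_hasSum h2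
    rw [← (tsum_aux hs1 hs2 hp1 hp2).tsum_eq]
    refine tsum_congr fun p => ?_
    rw [pw_blk]
    unfold GG
    rw [Z_blk, Real.log_mul (Z_pos q a hq _).ne' (Z_pos q b hq _).ne']
    ring
  · intro J hJ
    have hJ' : pw (blk a b m1 m2) J ≠ 0 := left_ne_zero_of_mul hJ
    have hz : ∀ e, blk a b m1 m2 e = 0 → J e = 0 := by
      intro e he
      by_contra h
      apply hJ'
      unfold pw
      exact Finset.prod_eq_zero (Finset.mem_univ e) (by rw [he, zero_pow h, zero_div])
    refine ⟨(fun e => J (Fin.castAdd b e.1, Fin.castAdd b e.2),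
      fun e => J (Fin.natAdd a e.1, Fin.natAdd a e.2)), ?_⟩
    funext ⟨i, j⟩
    refine Fin.addCases (fun i => ?_) (fun i => ?_) i <;>
    refine Fin.addCases (fun j => ?_) (fun j => ?_) j
    · simp [blk]
    · rw [hz _ (by simp [blk])]; simp [blk]
    · rw [hz _ (by simp [blk])]; simp [blk]
    · simp [blk]

lemma superadd (q a b : ℕ) (hq : 2 ≤ q) (ha : 0 < a) (hb : 0 < b) (β c : ℝ) (hβ : 0 ≤ β)
    (hc : 0 ≤ c) :
    Real.exp (c * b / 2) * (∑' J, pw (fun _ : Fin a × Fin a => c / (2 * a)) J * GG q a β J) +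
    Real.exp (c * a / 2) * (∑' J, pw (fun _ : Fin b × Fin b => c / (2 * b)) J * GG q b β J) ≤
    ∑' J, pw (fun _ : Fin (a+b) × Fin (a+b) => c / (2 * ((a + b : ℕ) : ℝ))) J * GG q (a+b) β J := by
  have ha' : (0:ℝ) < a := by exact_mod_cast ha
  have hb' : (0:ℝ) < b := by exact_mod_cast hb
  have e1 : c * a / 2 = ∑ e : Fin a × Fin a, c / (2 * (a:ℝ)) := by simp; field_simp
  have e2 : c * b / 2 = ∑ e : Fin b × Fin b, c / (2 * (b:ℝ)) := by simp; field_simp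
  rw [e1, e2, ← split_sum q a b hq β hβ _ _ (fun _ => by positivity) (fun _ => by positivity)]
  refine tsum_pw_le (fun _ => by positivity) (fun e => ?_) _ _ (GG_bound q (a+b) hq β hβ)
    (key q (a+b) hq β hβ _ ?_ ?_)
  · unfold blk
    refine Fin.addCases (fun i => ?_) (fun i => ?_) e.1 <;>
    refine Fin.addCases (fun j => ?_) (fun j => ?_) e.2 <;> simp <;> positivity
  · simp only [Fintype.sum_prod_type, Fin.sum_univ_add]
    simp [blk]
    field_simp
    ring
  · intro u
    have : ∑ e : Fin (a+b) × Fin (a+b), (c / (2 * ((a + b : ℕ) : ℝ)) -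
        blk a b (fun _ => c / (2 * (a:ℝ))) (fun _ => c / (2 * (b:ℝ))) e) * (u e.1 * u e.2) =
        c / 2 * (((∑ i, u (Fin.castAdd b i)) + ∑ i, u (Fin.natAdd a i)) ^ 2 / (a + b) -
        (∑ i, u (Fin.castAdd b i)) ^ 2 / a - (∑ i, u (Fin.natAdd a i)) ^ 2 / b) := by
      simp only [Fintype.sum_prod_type, Fin.sum_univ_add]
      simp only [blk, Fin.addCases_left, Fin.addCases_right, ← Finset.mul_sum, sub_zero,
        ← Finset.sum_mul, Finset.sum_add_distrib]
      push_cast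
      field_simp
      ring
    rw [this]
    refine mul_nonpos_of_nonneg_of_nonpos (by positivity) ?_
    set S := ∑ i, u (Fin.castAdd b i)
    set T := ∑ i, u (Fin.natAdd a i)
    have : (S + T) ^ 2 / (a + b) - S ^ 2 / a - T ^ 2 / b = - ((b * S - a * T) ^ 2 / (a * b * (a + b))) := by
      field_simp
      ring
    rw [this, neg_nonpos]
    positivity

lemma p_eq (q N : ℕ) (hN : 0 < N) (β c : ℝ) : N * potts.p q N β c =
    Real.exp (-(c * N / 2)) * ∑' J, pw (fun _ : Fin N × Fin N => c / (2 * N)) J * GG q N β J := by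
  have hN' : (0:ℝ) < N := by exact_mod_cast hN
  unfold potts.p potts.pmat potts.E
  rw [← tsum_mul_left, ← tsum_mul_left, ← (Equiv.curry _ _ _).tsum_eq]
  refine tsum_congr fun J => ?_
  have : ∏ i, ∏ j, poissonPMF (c / (2 * N)) (Equiv.curry (Fin N) (Fin N) ℕ J i j) =
      Real.exp (-(c * N / 2)) * pw (fun _ : Fin N × Fin N => c / (2 * N)) J := by
    have e1 : -(c * N / 2) = ∑ e : Fin N × Fin N, -(c / (2 * (N:ℝ))) := by simp; field_simp
    rw [e1, Real.exp_sum]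
    unfold pw
    rw [← Finset.prod_mul_distrib, Fintype.prod_prod_type]
    refine Finset.prod_congr rfl fun i _ => Finset.prod_congr rfl fun j _ => ?_
    unfold poissonPMF
    rw [mul_div_assoc]; rfl
  rw [this]
  unfold GG
  simp only [Equiv.curry_apply, Function.curry]
  field_simp

lemma p_super (q a b : ℕ) (hq : 2 ≤ q) (β c : ℝ) (hβ : 0 ≤ β) (hc : 0 ≤ c) :
    a * potts.p q a β c + b * potts.p q b β c ≤ ((a + b : ℕ) : ℝ) * potts.p q (a + b) β c := by
  rcases Nat.eq_zero_or_pos a with rfl | ha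
  · simp
  rcases Nat.eq_zero_or_pos b with rfl | hb
  · simp
  rw [p_eq q a ha, p_eq q b hb, p_eq q (a+b) (by omega)]
  have := mul_le_mul_of_nonneg_left (superadd q a b hq ha hb β c hβ hc)
    (Real.exp_pos (-(c * ((a + b : ℕ) : ℝ) / 2))).le
  refine le_trans (le_of_eq ?_) this
  rw [mul_add, ← mul_assoc, ← mul_assoc, ← Real.exp_add, ← Real.exp_add]
  push_cast
  congr 3 <;> ring_nf

lemma p_le (q N : ℕ) (hq : 2 ≤ q) (hN : 0 < N) (β c : ℝ) (hβ : 0 ≤ β) (hc : 0 ≤ c) :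
    potts.p q N β c ≤ potts.annealed q β c := by
  have hN' : (0:ℝ) < N := by exact_mod_cast hN
  have h := mul_le_mul_of_nonneg_left (annealed_bound q N hq hN β c hβ hc)
    (Real.exp_pos (-(c * N / 2))).le
  rw [← p_eq q N hN, ← mul_assoc, ← Real.exp_add, neg_add_cancel, Real.exp_zero, one_mul] at h
  exact le_of_mul_le_mul_left h hN'

end pottsaux

/-- the thermodynamic limit of the quenched pressure exists, equals
the supremum over system sizes, and is bounded by the annealed pressure. -/
theorem statement6 (q : ℕ) (hq : 2 ≤ q) (β c : ℝ) (hβ : 0 ≤ β) (hc : 0 ≤ c) :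
    Filter.Tendsto (fun N => potts.p q N β c) Filter.atTop
        (nhds (⨆ N : ℕ, potts.p q (N + 1) β c)) ∧
    (⨆ N : ℕ, potts.p q (N + 1) β c) ≤ potts.annealed q β c := by
  have hle : ∀ N : ℕ, potts.p q (N + 1) β c ≤ potts.annealed q β c := fun N =>
    p_le q (N+1) hq (Nat.succ_pos N) β c hβ hc
  refine ⟨?_, ciSup_le hle⟩
  have hbdd : BddAbove (Set.range fun N : ℕ => potts.p q (N + 1) β c) :=
    ⟨_, by rintro _ ⟨N, rfl⟩; exact hle N⟩
  have hsub : Subadditive (fun N : ℕ => -(N * potts.p q N β c)) := fun a b => by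
    have := p_super q a b hq β c hβ hc
    simp only
    linarith
  have hdiv : ∀ N : ℕ, N ≠ 0 → -(N * potts.p q N β c) / (N:ℝ) = - potts.p q N β c := by
    intro N hN
    have : (N:ℝ) ≠ 0 := by exact_mod_cast hN
    field_simp
  have hb : BddBelow (Set.range fun N : ℕ => -(N * potts.p q N β c) / (N:ℝ)) := by
    refine ⟨min 0 (-potts.annealed q β c), ?_⟩
    rintro _ ⟨N, rfl⟩
    rcases Nat.eq_zero_or_pos N with rfl | hN
    · simp
    · simp only
      rw [hdiv N hN.ne']
      exact (min_le_right _ _).trans (neg_le_neg (p_le q N hq hN β c hβ hc))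
  have hlim := (hsub.tendsto_lim hb).neg
  have ht : Filter.Tendsto (fun N => potts.p q N β c) Filter.atTop (nhds (-hsub.lim)) := by
    refine hlim.congr' ?_
    filter_upwards [Filter.eventually_ne_atTop 0] with N hN
    rw [hdiv N hN, neg_neg]
  have heq : -hsub.lim = ⨆ N : ℕ, potts.p q (N + 1) β c := by
    apply le_antisymm
    · refine le_of_tendsto ht ?_
      filter_upwards [Filter.eventually_ne_atTop 0] with N hN
      obtain ⟨k, rfl⟩ := Nat.exists_eq_succ_of_ne_zero hN
      exact le_ciSup hbdd k
    · refine ciSup_le fun N => ?_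
      have := hsub.lim_le_div hb (n := N + 1) (Nat.succ_ne_zero N)
      rw [hdiv _ (Nat.succ_ne_zero N)] at this
      linarith
  rw [← heq]
  exact ht
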